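/- Let n ≥ 2 be an integer. (a) If n is even, then s_k(n) is odd for every k ≥ 0. (b) If n is odd, then s_k(n) is even if and only if k ≡ 1 (mod 3). (c) If q is an odd prime with n ≡ 2 (mod q), then q divides s_k(n) if and only if q divides 2k + 1. (d) If q is an odd prime with n ≡ −2 (mod q), then s_k(n) ≡ (−1)^k (mod q) for every k ≥ 0. -/

import Mathlib

/-!
Since `s_k(n)` is an integer polynomial in `n`, its residue modulo `m` depends only on that of `n`.
It therefore suffices to evaluate the sequence at values of `n` for which the roots of the
characteristic polynomial `x² - n x + 1` are roots of unity: `n = ±2` gives a double root `±1`,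
whence `s_k(2) = 2k + 1` and `s_k(-2) = (-1)^k`; `n = 1` gives the primitive sixth roots of unity,
whence `s_{k+3}(1) = -s_k(1)`. Parity is the case `m = 2`, comparing `n` with `2` or `1`.
-/

/-- The sequence `s_k(n)`: `s_0 = 1`, `s_1 = n + 1`, `s_{k+2} = n·s_{k+1} − s_k`. -/
def s (n : ℤ) : ℕ → ℤ
  | 0 => 1
  | 1 => n + 1
  | k + 2 => n * s n (k + 1) - s n k

/-- The sequence `r_k(n)`: `r_0 = 1`, `r_1 = n − 1`, `r_{k+2} = n·r_{k+1} − r_k`. -/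
def r (n : ℤ) : ℕ → ℤ
  | 0 => 1
  | 1 => n - 1
  | k + 2 => n * r n (k + 1) - r n k

/-- Dilated Chebyshev polynomials of the first kind: `T_0 = 2`, `T_1 = n`. -/
def T (n : ℤ) : ℕ → ℤ
  | 0 => 2
  | 1 => n
  | k + 2 => n * T n (k + 1) - T n k

/-- Dilated Chebyshev polynomials of the second kind: `U_0 = 1`, `U_1 = n`. -/
def U (n : ℤ) : ℕ → ℤ
  | 0 => 1
  | 1 => n
  | k + 2 => n * U n (k + 1) - U n k

theorem s_add_two (n : ℤ) (k : ℕ) : s n (k + 2) = n * s n (k + 1) - s n k := rfl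

theorem s_modEq_of_modEq {m n n' : ℤ} (h : n ≡ n' [ZMOD m]) (k : ℕ) : s n k ≡ s n' k [ZMOD m] := by
  induction k using Nat.twoStepInduction with
  | zero => rfl
  | one => exact h.add_right 1
  | more k ih₀ ih₁ => exact (h.mul ih₁).sub ih₀

theorem s_two_left (k : ℕ) : s 2 k = 2 * k + 1 := by
  induction k using Nat.twoStepInduction with
  | zero => rfl
  | one => rfl
  | more k ih₀ ih₁ =>
    rw [s_add_two, ih₀, ih₁]
    push_cast
    ring

theorem s_neg_two_left (k : ℕ) : s (-2) k = (-1) ^ k := by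
  induction k using Nat.twoStepInduction with
  | zero => rfl
  | one => rfl
  | more k ih₀ ih₁ =>
    rw [s_add_two, ih₀, ih₁]
    ring

theorem s_one_left_add_three (k : ℕ) : s 1 (k + 3) = -s 1 k := by
  rw [s_add_two, s_add_two]
  ring

theorem even_s_one_left_iff : ∀ k : ℕ, Even (s 1 k) ↔ k % 3 = 1
  | 0 => by decide
  | 1 => by decide
  | 2 => by decide
  | k + 3 => by
    rw [s_one_left_add_three, even_neg, even_s_one_left_iff k, Nat.add_mod_right]

theorem dvd_s_iff_of_modEq_two {m n : ℤ} (h : n ≡ 2 [ZMOD m]) (k : ℕ) :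
    m ∣ s n k ↔ m ∣ 2 * (k : ℤ) + 1 := by
  rw [(s_modEq_of_modEq h k).dvd_iff, s_two_left]

theorem s_modEq_neg_one_pow_of_modEq_neg_two {m n : ℤ} (h : n ≡ -2 [ZMOD m]) (k : ℕ) :
    s n k ≡ (-1) ^ k [ZMOD m] :=
  s_neg_two_left k ▸ s_modEq_of_modEq h k

theorem odd_s_of_even {n : ℤ} (hn : Even n) (k : ℕ) : Odd (s n k) := by
  have h : n ≡ 2 [ZMOD 2] := Int.even_iff.mp hn
  rw [← Int.not_even_iff_odd, even_iff_two_dvd, dvd_s_iff_of_modEq_two h]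
  lia

theorem even_s_iff_of_odd {n : ℤ} (hn : Odd n) (k : ℕ) : Even (s n k) ↔ k % 3 = 1 := by
  have h : n ≡ 1 [ZMOD 2] := Int.odd_iff.mp hn
  rw [even_iff_two_dvd, (s_modEq_of_modEq h k).dvd_iff, ← even_iff_two_dvd, even_s_one_left_iff]

theorem s_parity_and_prime_divisors_general (n : ℤ) :
    (Even n → ∀ k : ℕ, Odd (s n k)) ∧
    (Odd n → ∀ k : ℕ, (Even (s n k) ↔ k % 3 = 1)) ∧
    (∀ m : ℤ, n ≡ 2 [ZMOD m] → ∀ k : ℕ, (m ∣ s n k ↔ m ∣ 2 * (k : ℤ) + 1)) ∧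
    (∀ m : ℤ, n ≡ -2 [ZMOD m] → ∀ k : ℕ, s n k ≡ (-1) ^ k [ZMOD m]) :=
  ⟨odd_s_of_even, even_s_iff_of_odd, fun _ => dvd_s_iff_of_modEq_two,
    fun _ => s_modEq_neg_one_pow_of_modEq_neg_two⟩

theorem s_parity_and_prime_divisors (n : ℤ) (hn : 2 ≤ n) :
    (Even n → ∀ k : ℕ, Odd (s n k)) ∧
    (Odd n → ∀ k : ℕ, (Even (s n k) ↔ k % 3 = 1)) ∧
    (∀ q : ℕ, q.Prime → Odd q → n ≡ 2 [ZMOD (q : ℤ)] →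
      ∀ k : ℕ, ((q : ℤ) ∣ s n k ↔ (q : ℤ) ∣ 2 * (k : ℤ) + 1)) ∧
    (∀ q : ℕ, q.Prime → Odd q → n ≡ -2 [ZMOD (q : ℤ)] →
      ∀ k : ℕ, s n k ≡ (-1) ^ k [ZMOD (q : ℤ)]) := by
  obtain ⟨h_even, h_odd, h_two, h_neg_two⟩ := s_parity_and_prime_divisors_general n
  exact ⟨h_even, h_odd, fun q _ _ => h_two q, fun q _ _ => h_neg_two q⟩
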